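/- Let (ξ_i)_{i∈I} be a finite family of {0,1}-valued random variables with dependency graph G on I. Set p_i := E[ξ_i], p_{ij} := E[ξ_i ξ_j], λ := ∑_{i∈I} p_i (assume λ > 0), W := ∑_{i∈I} ξ_i, and let Z be a Poisson random variable with mean λ. Then d_TV(W, Z) ≤ min(3, λ^{-1}) · ( ∑_{i∈I} ∑_{j∈N_i∖{i}} p_{ij} + ∑_{i∈I} ∑_{j∈N_i} p_i p_j ), where d_TV(W,Z) := sup_{A⊆ℕ} |P(W∈A) − P(Z∈A)| is the total variation distance between the laws of W and Z. -/

import Mathlib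

open MeasureTheory Filter
open scoped ENNReal NNReal Topology

noncomputable section

/-- `G` is a dependency graph for the family of random variables `ξ`: whenever `I₁, I₂` are
disjoint sets of indices with no edge of `G` joining a point of `I₁` to a point of `I₂`, the
families `(ξ i)_{i ∈ I₁}` and `(ξ j)_{j ∈ I₂}` are independent. -/
def HasDependencyGraph {Ω : Type*} [MeasurableSpace Ω] (P : Measure Ω) {I : Type*}
    (G : SimpleGraph I) {β : Type*} [MeasurableSpace β] (ξ : I → Ω → β) : Prop :=
  ∀ I₁ I₂ : Set I, Disjoint I₁ I₂ →
    (∀ i ∈ I₁, ∀ j ∈ I₂, ¬ G.Adj i j) →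
    ProbabilityTheory.IndepFun (fun ω => fun i : I₁ => ξ i ω)
      (fun ω => fun j : I₂ => ξ j ω) P

namespace SteinChen

/-- Poisson weights. -/
def w (l : ℝ) (k : ℕ) : ℝ := Real.exp (-l) * l ^ k / (Nat.factorial k : ℝ)

lemma w_pos {l : ℝ} (hl : 0 < l) (k : ℕ) : 0 < w l k := by
  unfold w; positivity

lemma w_succ (l : ℝ) (k : ℕ) : ((k : ℝ) + 1) * w l (k + 1) = l * w l k := by
  unfold w
  rw [Nat.factorial_succ]
  have : (Nat.factorial k : ℝ) ≠ 0 := by positivity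
  push_cast
  field_simp
  ring

lemma w_hasSum {l : ℝ} (hl : 0 < l) : HasSum (w l) 1 :=
  ProbabilityTheory.hasSum_one_poissonMeasure ⟨l, hl.le⟩

lemma w_mean {l : ℝ} (hl : 0 < l) : HasSum (fun k : ℕ => (k : ℝ) * w l k) l := by
  have h : HasSum (fun k : ℕ => ((k + 1 : ℕ) : ℝ) * w l (k + 1)) (l * 1) := by
    have e : (fun k : ℕ => ((k + 1 : ℕ) : ℝ) * w l (k + 1)) = fun k => l * w l k := by
      funext k
      rw [← w_succ]; push_cast; ring
    rw [e]
    exact (w_hasSum hl).mul_left l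
  have := (hasSum_nat_add_iff (f := fun k : ℕ => (k : ℝ) * w l k) 1).1 h
  simpa using this

/-- numerator -/
def N (l : ℝ) (h : ℕ → ℝ) (H : ℝ) (k : ℕ) : ℝ :=
  ∑ i ∈ Finset.range (k + 1), (h i - H) * w l i

lemma upper {l : ℝ} (hl : 0 < l) (h : ℕ → ℝ) (h0 : ∀ i, 0 ≤ h i) (h1 : ∀ i, h i ≤ 1) (H : ℝ)
    (hH : HasSum (fun i => h i * w l i) H) (n : ℕ) :
    ((n : ℝ) + 1) * N l h H (n + 1) - l * N l h H n ≤
      w l (n + 1) * ((n + 1) * (1 - w l 0)) := by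
  have hN : ∀ k, N l h H k = (∑ i ∈ Finset.range (k + 1), h i * w l i)
      - H * ∑ i ∈ Finset.range (k + 1), w l i := by
    intro k
    simp only [N, sub_mul, Finset.sum_sub_distrib, Finset.mul_sum]
  have hFm := Finset.sum_range_succ (w l) (n + 1)
  have hSm := Finset.sum_range_succ (fun i => h i * w l i) (n + 1)
  have ha : 0 ≤ ∑ i ∈ Finset.range (n + 1), h i * w l i :=
    Finset.sum_nonneg fun i _ => mul_nonneg (h0 i) (w_pos hl i).le
  have ht : ∑ i ∈ Finset.range (n + 1 + 1), h i * w l i ≤ H :=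
    sum_le_hasSum _ (fun i _ => mul_nonneg (h0 i) (w_pos hl i).le) hH
  have hlF : l * ∑ i ∈ Finset.range (n + 1), w l i
      = ∑ i ∈ Finset.range (n + 1), ((i : ℝ) + 1) * w l (i + 1) := by
    rw [Finset.mul_sum]; exact Finset.sum_congr rfl fun i _ => (w_succ l i).symm
  have hF' := Finset.sum_range_succ' (w l) (n + 1)
  have hthird : l * ∑ i ∈ Finset.range (n + 1), w l i ≤
      (n + 1) * ((∑ i ∈ Finset.range (n + 1 + 1), w l i) - w l 0) := by
    rw [hlF, hF', add_sub_cancel_right, Finset.mul_sum]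
    refine Finset.sum_le_sum fun i hi => ?_
    have : (i : ℝ) ≤ n := by
      have := Finset.mem_range.1 hi
      exact_mod_cast (by omega : i ≤ n)
    have := w_pos hl (i + 1)
    gcongr
  have hfirst : ((n : ℝ) + 1) * (1 - ∑ i ∈ Finset.range (n + 1 + 1), w l i)
      ≤ l * (1 - ∑ i ∈ Finset.range (n + 1), w l i) := by
    have hs : HasSum (fun i : ℕ => ((i : ℝ) * w l i - (n + 1) * w l i)) (l - (n + 1) * 1) :=
      (w_mean hl).sub ((w_hasSum hl).mul_left _)
    have := sum_le_hasSum (Finset.range (n + 1 + 1)) (fun i hi => by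
      have hi' : (n : ℝ) + 1 ≤ i := by
        simp only [Finset.mem_range, not_lt] at hi
        exact_mod_cast (by omega : n + 1 ≤ i)
      have := w_pos hl i
      nlinarith) hs
    rw [Finset.sum_sub_distrib, ← Finset.mul_sum,
      Finset.sum_range_succ' (fun i : ℕ => (i : ℝ) * w l i)] at this
    push_cast at this
    rw [← hlF] at this
    linarith
  have hw := w_pos hl (n + 1)
  have hw0 := w_pos hl 0
  rw [hN, hN]
  have hx0 := h0 (n + 1)
  have hx1 := h1 (n + 1)
  have hFle : ∑ i ∈ Finset.range (n + 1 + 1), w l i ≤ 1 :=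
    sum_le_hasSum _ (fun i _ => (w_pos hl i).le) (w_hasSum hl)
  have hF0 : 0 ≤ ∑ i ∈ Finset.range (n + 1), w l i :=
    Finset.sum_nonneg fun i _ => (w_pos hl i).le
  rw [hSm] at ht ⊢
  generalize (∑ i ∈ Finset.range (n + 1), h i * w l i) = a at *
  generalize (∑ i ∈ Finset.range (n + 1 + 1), w l i) = Fm at *
  generalize (∑ i ∈ Finset.range (n + 1), w l i) = F at *
  generalize w l (n + 1) = q at *
  generalize w l 0 = q0 at *
  generalize h (n + 1) = x at *
  have hn : (0 : ℝ) ≤ n := n.cast_nonneg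
  have e1 : 0 ≤ a * (l * (1 - F) - (n + 1) * (1 - Fm)) := mul_nonneg ha (by linarith)
  have e2 : 0 ≤ (H - (a + x * q)) * ((n + 1) * Fm - l * F) := by
    apply mul_nonneg (by linarith)
    nlinarith
  have e3 : 0 ≤ q * (1 - x) * ((n + 1) * (1 - Fm) + l * F) := by
    apply mul_nonneg (mul_nonneg hw.le (by linarith))
    have : 0 ≤ l * F := by positivity
    nlinarith
  have e4 : 0 ≤ q * ((n + 1) * (Fm - q0) - l * F) := mul_nonneg hw.le (by linarith)
  nlinarith

lemma exists_sol {l : ℝ} (hl : 0 < l) (h : ℕ → ℝ) (h0 : ∀ i, 0 ≤ h i) (h1 : ∀ i, h i ≤ 1) (H : ℝ)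
    (hH : HasSum (fun i => h i * w l i) H) :
    ∃ g : ℕ → ℝ, (∀ k : ℕ, l * g (k + 1) - k * g k = h k - H) ∧
      ∀ n : ℕ, |g (n + 2) - g (n + 1)| ≤ min 3 l⁻¹ := by
  refine ⟨fun k => N l h H (k - 1) / (l * w l (k - 1)), ?_, ?_⟩
  · intro k
    cases k with
    | zero =>
      have := (w_pos hl 0).ne'
      simp [N]
      field_simp
    | succ n =>
      have a1 := (w_pos hl (n+1)).ne'
      have a2 : l * w l n = (n + 1) * w l (n + 1) := (w_succ l n).symm
      have a3 : N l h H (n + 1) = N l h H n + (h (n + 1) - H) * w l (n + 1) :=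
        Finset.sum_range_succ _ _
      have a4 : (n : ℝ) + 1 ≠ 0 := by positivity
      simp only [Nat.add_sub_cancel]
      rw [a2, a3]
      push_cast
      field_simp
      ring
  · intro n
    have key : ∀ (h : ℕ → ℝ) (h0 : ∀ i, 0 ≤ h i) (h1 : ∀ i, h i ≤ 1) (H : ℝ)
        (hH : HasSum (fun i => h i * w l i) H),
        N l h H (n + 1) / (l * w l (n + 1)) - N l h H n / (l * w l n) ≤ min 3 l⁻¹ := by
      intro h h0 h1 H hH
      have u := upper hl h h0 h1 H hH n
      have hw := w_pos hl (n + 1)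
      have a2 : l * w l n = (n + 1) * w l (n + 1) := (w_succ l n).symm
      have a4 : (0 : ℝ) < (n : ℝ) + 1 := by positivity
      have e : N l h H (n + 1) / (l * w l (n + 1)) - N l h H n / (l * w l n) =
          (((n : ℝ) + 1) * N l h H (n + 1) - l * N l h H n) / (l * ((n + 1) * w l (n + 1))) := by
        rw [a2]; field_simp
      have e2 : (((n : ℝ) + 1) * N l h H (n + 1) - l * N l h H n) / (l * ((n + 1) * w l (n + 1)))
          ≤ (1 - w l 0) / l := by
        rw [div_le_div_iff₀ (by positivity) hl]
        nlinarith
      have hw0 : w l 0 = Real.exp (-l) := by simp [w]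
      have hexp := Real.add_one_le_exp (-l)
      have hpos := Real.exp_pos (-l)
      rw [e]
      refine e2.trans (le_min ?_ ?_)
      · rw [div_le_iff₀ hl, hw0]; linarith
      · rw [inv_eq_one_div, hw0]; gcongr; linarith
    simp only [show n + 2 - 1 = n + 1 from rfl, Nat.add_sub_cancel]
    rw [abs_le]
    refine ⟨?_, key h h0 h1 H hH⟩
    have hc := key (fun i => 1 - h i) (fun i => by linarith [h1 i]) (fun i => by linarith [h0 i])
      (1 - H) (by simpa [sub_mul] using (w_hasSum hl).sub hH)
    have hneg : ∀ k, N l (fun i => 1 - h i) (1 - H) k = - N l h H k := by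
      intro k
      simp only [N, ← Finset.sum_neg_distrib]
      exact Finset.sum_congr rfl fun i _ => by ring
    rw [hneg, hneg, neg_div, neg_div] at hc
    linarith

lemma lip {g : ℕ → ℝ} {D : ℝ} (hg : ∀ n : ℕ, |g (n + 2) - g (n + 1)| ≤ D) (a b : ℕ) :
    |g (a + 1 + b) - g (a + 1)| ≤ D * b := by
  induction b with
  | zero => simp
  | succ b ih =>
    have h2 := hg (a + b)
    rw [show a + b + 2 = a + 1 + (b + 1) by ring, show a + b + 1 = a + 1 + b by ring] at h2
    calc _ ≤ |g (a + 1 + (b + 1)) - g (a + 1 + b)| + |g (a + 1 + b) - g (a + 1)| :=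
          abs_sub_le _ _ _
      _ ≤ D + D * b := add_le_add h2 ih
      _ = _ := by push_cast; ring

lemma integ {Ω : Type*} [MeasurableSpace Ω] (P : Measure Ω) [IsProbabilityMeasure P]
    {I : Type*} [Fintype I] [DecidableEq I]
    (ξ : I → Ω → ℕ) (hmeas : ∀ i, Measurable (ξ i))
    (hBer : ∀ i ω, ξ i ω = 0 ∨ ξ i ω = 1) (Φ : (I → ℕ) → ℝ) :
    Integrable (fun ω => Φ (fun i => ξ i ω)) P := by
  have hm : Measurable (fun ω => Φ (fun i => ξ i ω)) :=
    (Measurable.of_discrete (f := Φ)).comp (measurable_pi_lambda _ hmeas)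
  refine Integrable.of_bound hm.aestronglyMeasurable
    (∑ v ∈ Fintype.piFinset (fun _ : I => ({0, 1} : Finset ℕ)), ‖Φ v‖) (ae_of_all _ fun ω => ?_)
  refine Finset.single_le_sum (f := fun v => ‖Φ v‖) (fun v _ => norm_nonneg _) ?_
  simp only [Fintype.mem_piFinset]
  intro i
  simpa using hBer i ω

end SteinChen

/-- The Stein–Chen method for sums of Bernoulli random variables with a dependency graph:
the total variation distance between the law of `W = ∑ ξ_i` and the Poisson distribution with
mean `λ = ∑ p_i` is bounded in terms of first and second moments over neighborhoods. -/
theorem stein_chen_poisson_approximation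
    {Ω : Type*} [MeasurableSpace Ω] (P : Measure Ω) [IsProbabilityMeasure P]
    {I : Type*} [Fintype I] [DecidableEq I] (G : SimpleGraph I) [DecidableRel G.Adj]
    (ξ : I → Ω → ℕ) (hmeas : ∀ i, Measurable (ξ i))
    (hBer : ∀ i ω, ξ i ω = 0 ∨ ξ i ω = 1)
    (hdep : HasDependencyGraph P G ξ)
    (p : I → ℝ) (hp : ∀ i, p i = ∫ ω, (ξ i ω : ℝ) ∂P)
    (pp : I → I → ℝ) (hpp : ∀ i j, pp i j = ∫ ω, (ξ i ω : ℝ) * (ξ j ω : ℝ) ∂P)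
    (lam : ℝ) (hlam : lam = ∑ i, p i) (hlampos : 0 < lam) :
    (⨆ A : Set ℕ,
        |(P {ω | (∑ i, ξ i ω) ∈ A}).toReal -
          ∑' j : A, Real.exp (-lam) * lam ^ (j : ℕ) / (Nat.factorial (j : ℕ) : ℝ)|) ≤
      min 3 lam⁻¹ *
        ((∑ i, ∑ j ∈ G.neighborFinset i, pp i j) +
          ∑ i, ∑ j ∈ insert i (G.neighborFinset i), p i * p j) := by
  classical
  refine ciSup_le fun A => ?_
  set h : ℕ → ℝ := A.indicator 1 with hh
  have h0 : ∀ i, 0 ≤ h i := fun i => Set.indicator_nonneg (fun _ _ => zero_le_one) i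
  have h1 : ∀ i, h i ≤ 1 := fun i => Set.indicator_le_self' (fun _ _ => zero_le_one) i
  have hind : (fun i => h i * SteinChen.w lam i) = A.indicator (SteinChen.w lam) := by
    funext i
    by_cases hi : i ∈ A <;> simp [hh, hi]
  set H : ℝ := ∑' j : A, Real.exp (-lam) * lam ^ (j : ℕ) / (Nat.factorial (j : ℕ) : ℝ) with hHdef
  have hH : HasSum (fun i => h i * SteinChen.w lam i) H := by
    rw [hind]
    have e : H = ∑' i, A.indicator (SteinChen.w lam) i := tsum_subtype A (SteinChen.w lam)
    rw [e]
    exact ((SteinChen.w_hasSum hlampos).summable.indicator A).hasSum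
  obtain ⟨g, hg, hD⟩ := SteinChen.exists_sol hlampos h h0 h1 H hH
  have hD0 : 0 ≤ min 3 lam⁻¹ := le_min (by norm_num) (by positivity)
  generalize min 3 lam⁻¹ = D at *
  have hint := SteinChen.integ P ξ hmeas hBer
  -- the Stein identity in expectation
  have hmeasA : MeasurableSet {ω | (∑ i, ξ i ω) ∈ A} :=
    (Finset.measurable_sum _ fun i _ => hmeas i) (MeasurableSet.of_discrete (s := A))
  have hPA : (P {ω | (∑ i, ξ i ω) ∈ A}).toReal = ∫ ω, h (∑ i, ξ i ω) ∂P := by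
    have : (fun ω => h (∑ i, ξ i ω)) = {ω | (∑ i, ξ i ω) ∈ A}.indicator 1 := by
      funext ω
      by_cases hi : (∑ i, ξ i ω) ∈ A <;> simp [hh, hi]
    rw [this, integral_indicator_one hmeasA]; rfl
  -- the local terms
  have hterm : ∀ i, |p i * (∫ ω, g ((∑ j, ξ j ω) + 1) ∂P) -
      ∫ ω, (ξ i ω : ℝ) * g (∑ j, ξ j ω) ∂P| ≤
      D * ((∑ j ∈ G.neighborFinset i, pp i j)
        + ∑ j ∈ insert i (G.neighborFinset i), p i * p j) := by
    intro i
    set S := insert i (G.neighborFinset i) with hS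
    have hp0 : 0 ≤ p i := by rw [hp]; exact integral_nonneg fun ω => Nat.cast_nonneg _
    have hsplit : ∀ ω, ∑ j, ξ j ω = (∑ j ∈ Sᶜ, ξ j ω) + ∑ j ∈ S, ξ j ω :=
      fun ω => (Finset.sum_compl_add_sum S _).symm
    have hSi : ∀ ω, ∑ j ∈ S, ξ j ω = ξ i ω + ∑ j ∈ G.neighborFinset i, ξ j ω :=
      fun ω => Finset.sum_insert (by simp)
    have hindep : ∫ ω, (ξ i ω : ℝ) * g ((∑ j ∈ Sᶜ, ξ j ω) + 1) ∂P
        = p i * ∫ ω, g ((∑ j ∈ Sᶜ, ξ j ω) + 1) ∂P := by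
      have hd := hdep {i} (↑(Sᶜ) : Set I) (by simp [hS]) (by
        intro a ha b hb
        rw [Set.mem_singleton_iff] at ha
        subst ha
        simp [hS] at hb
        tauto)
      have hc := hd.comp (φ := fun v => (v ⟨i, rfl⟩ : ℝ))
        (ψ := fun v => g ((∑ j, if hj : j ∈ (↑(Sᶜ) : Set I) then v ⟨j, hj⟩ else 0) + 1))
        (Measurable.of_discrete) (Measurable.of_discrete)
      have e : (fun ω => g ((∑ j ∈ Sᶜ, ξ j ω) + 1)) =
        (fun v : (↑(Sᶜ) : Set I) → ℕ => g ((∑ j, if hj : j ∈ (↑(Sᶜ) : Set I) then v ⟨j, hj⟩ else 0) + 1))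
          ∘ (fun ω => fun j : (↑(Sᶜ) : Set I) => ξ j ω) := by
        funext ω
        simp only [Function.comp, dite_eq_ite, Finset.mem_coe]
        rw [Finset.sum_ite_mem, Finset.univ_inter]
      rw [← e] at hc
      have := hc.integral_fun_mul_eq_mul_integral
        (hint fun v => (v i : ℝ)).aestronglyMeasurable
        (hint fun v => g ((∑ j ∈ Sᶜ, v j) + 1)).aestronglyMeasurable
      rw [hp]
      exact this
    have i1 := hint fun v => g ((∑ j, v j) + 1)
    have i2 := hint fun v => (v i : ℝ) * g (∑ j, v j)
    have i3 := hint fun v => g ((∑ j ∈ Sᶜ, v j) + 1)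
    have i4 := hint fun v => (v i : ℝ) * g ((∑ j ∈ Sᶜ, v j) + 1)
    have hrew : p i * (∫ ω, g ((∑ j, ξ j ω) + 1) ∂P) - ∫ ω, (ξ i ω : ℝ) * g (∑ j, ξ j ω) ∂P
        = p i * (∫ ω, (g ((∑ j, ξ j ω) + 1) - g ((∑ j ∈ Sᶜ, ξ j ω) + 1)) ∂P)
          - ∫ ω, ((ξ i ω : ℝ) * g (∑ j, ξ j ω) - (ξ i ω : ℝ) * g ((∑ j ∈ Sᶜ, ξ j ω) + 1)) ∂P := by
      rw [integral_sub i1 i3, integral_sub i2 i4, hindep]; ring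
    have b1 : |∫ ω, (g ((∑ j, ξ j ω) + 1) - g ((∑ j ∈ Sᶜ, ξ j ω) + 1)) ∂P| ≤
        D * ∑ j ∈ S, p j := by
      have : D * ∑ j ∈ S, p j = ∫ ω, D * ∑ j ∈ S, (ξ j ω : ℝ) ∂P := by
        rw [integral_const_mul, integral_finsetSum _ fun j _ => hint fun v => (v j : ℝ)]
        simp only [hp]
      rw [this]
      refine abs_integral_le_integral_abs.trans
        (integral_mono (i1.sub i3).abs (hint fun v => D * ∑ j ∈ S, (v j : ℝ)) fun ω => ?_)
      have := SteinChen.lip hD (∑ j ∈ Sᶜ, ξ j ω) (∑ j ∈ S, ξ j ω)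
      simp only [hsplit ω]
      rw [add_right_comm]
      simpa using this
    have b2 : |∫ ω, ((ξ i ω : ℝ) * g (∑ j, ξ j ω) - (ξ i ω : ℝ) * g ((∑ j ∈ Sᶜ, ξ j ω) + 1)) ∂P| ≤
        D * ∑ j ∈ G.neighborFinset i, pp i j := by
      have : D * ∑ j ∈ G.neighborFinset i, pp i j
          = ∫ ω, D * ∑ j ∈ G.neighborFinset i, (ξ i ω : ℝ) * (ξ j ω : ℝ) ∂P := by
        rw [integral_const_mul,
          integral_finsetSum _ fun j _ => hint fun v => (v i : ℝ) * (v j : ℝ)]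
        simp only [hpp]
      rw [this]
      refine abs_integral_le_integral_abs.trans
        (integral_mono (i2.sub i4).abs
          (hint fun v => D * ∑ j ∈ G.neighborFinset i, (v i : ℝ) * (v j : ℝ)) fun ω => ?_)
      have := SteinChen.lip hD (∑ j ∈ Sᶜ, ξ j ω) (∑ j ∈ G.neighborFinset i, ξ j ω)
      simp only [hsplit ω, hSi ω]
      rcases hBer i ω with hz | hz
      · simp [hz]
      · rw [hz, ← add_assoc]
        simpa using this
    rw [hrew]
    calc _ ≤ _ := abs_sub _ _
      _ ≤ p i * (D * ∑ j ∈ S, p j) + D * ∑ j ∈ G.neighborFinset i, pp i j := by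
        rw [abs_mul, abs_of_nonneg hp0]
        exact add_le_add (mul_le_mul_of_nonneg_left b1 hp0) b2
      _ = _ := by rw [← Finset.mul_sum]; ring
  have hmain : (P {ω | (∑ i, ξ i ω) ∈ A}).toReal - H = ∑ i, (p i * (∫ ω, g ((∑ j, ξ j ω) + 1) ∂P) -
      ∫ ω, (ξ i ω : ℝ) * g (∑ j, ξ j ω) ∂P) := by
    rw [Finset.sum_sub_distrib, ← Finset.sum_mul, ← hlam,
      ← integral_finsetSum _ fun i _ => hint fun v => (v i : ℝ) * g (∑ j, v j),
      ← integral_const_mul, ← integral_sub (hint fun v => lam * g ((∑ j, v j) + 1))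
        (hint fun v => ∑ i, (v i : ℝ) * g (∑ j, v j)), hPA]
    have : H = ∫ ω, H ∂P := by simp
    rw [this, ← integral_sub (hint fun v => h (∑ j, v j)) (integrable_const _)]
    refine integral_congr_ae (ae_of_all _ fun ω => ?_)
    have := hg (∑ j, ξ j ω)
    simp only [← Finset.sum_mul]
    push_cast at this
    exact this.symm
  rw [hmain, ← Finset.sum_add_distrib, Finset.mul_sum]
  exact (Finset.abs_sum_le_sum_abs _ _).trans (Finset.sum_le_sum fun i _ => hterm i)

end
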